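/- For every integer N ≥ 2 and every k ∈ ℂ with Re(k) > −3, the absolutely convergent integral ∫_{ℝ^{N−1}} ∏_{1≤j<ℓ≤N−1} (x_ℓ − x_j)² · ∏_{n=1}^{N−1} (1 + i x_n)^{−k−N} (1 − i x_n)^{−N} dx_1 ⋯ dx_{N−1} equals (2π)^{N−1} · 2^{−(N−1)(k+N+1)} · Γ(N+k+1)/Γ(k+2), where 2^{w} = exp(w log 2) and Γ denotes the complex Gamma function. -/

import Mathlib

open MeasureTheory Complex

/-!
The squared Vandermonde product of the `x m` is the Vandermonde determinant in the `1 + I * x m`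
times the one in the `1 - I * x m`. Absorbing the powers into these two determinants and applying
Andréief's identity turns the integral into `n!` times the determinant of the one-dimensional
integrals of `(1 + I * x) ^ (-(a - i)) * (1 - I * x) ^ (-(b - j))`. Each of these is Cauchy's beta
integral: when the parameters have large real part it is Parseval's formula for two gamma
densities, whose Fourier transforms are the two powers, and integration by parts shifts the
parameters down. Up to row and column factors the resulting determinant is that of
`Γ(a + b - 1 - i - j)`, which reduces to a Vandermonde determinant.
-/

open Filter Topology Set Asymptotics FourierTransform

lemma norm_cpow_mul_exp_neg_mul {t : ℝ} (ht : 0 < t) (c r : ℂ) :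
    ‖(t : ℂ) ^ c * cexp (-(r * t))‖ = t ^ c.re * Real.exp (-r.re * t) := by
  simp [norm_cpow_eq_rpow_re_of_pos ht, norm_exp]

lemma integrableOn_rpow_mul_exp_neg_mul {s b : ℝ} (hs : -1 < s) (hb : 0 < b) :
    IntegrableOn (fun t : ℝ => t ^ s * Real.exp (-b * t)) (Ioi 0) := by
  simpa using integrableOn_rpow_mul_exp_neg_mul_rpow hs one_pos hb

lemma aestronglyMeasurable_cpow_mul_exp_neg_mul (c r : ℂ) :
    AEStronglyMeasurable (fun t : ℝ => (t : ℂ) ^ c * cexp (-(r * t)))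
      (volume.restrict (Ioi 0)) := by
  refine ContinuousOn.aestronglyMeasurable (fun t ht => ?_) measurableSet_Ioi
  have hpow := continuousAt_ofReal_cpow_const t c (Or.inr (ne_of_gt ht))
  exact (hpow.mul (by fun_prop)).continuousWithinAt

lemma integrableOn_cpow_mul_exp_neg_mul {c r : ℂ} (hc : -1 < c.re) (hr : 0 < r.re) :
    IntegrableOn (fun t : ℝ => (t : ℂ) ^ c * cexp (-(r * t))) (Ioi 0) := by
  refine Integrable.mono' (integrableOn_rpow_mul_exp_neg_mul hc hr)
    (aestronglyMeasurable_cpow_mul_exp_neg_mul c r) ?_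
  filter_upwards [ae_restrict_mem measurableSet_Ioi] with t ht
  exact (norm_cpow_mul_exp_neg_mul ht c r).le

lemma hasDerivAt_cpow_mul_exp_neg_mul {t : ℝ} (ht : 0 < t) (c r : ℂ) :
    HasDerivAt (fun r : ℂ => (t : ℂ) ^ c * cexp (-(r * t)))
      (-((t : ℂ) ^ (c + 1) * cexp (-(r * t)))) r := by
  have ht' : (t : ℂ) ≠ 0 := ofReal_ne_zero.2 ht.ne'
  have hlin : HasDerivAt (fun r : ℂ => -(r * t)) (-(t : ℂ)) r := (hasDerivAt_mul_const _).neg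
  refine (hlin.cexp.const_mul ((t : ℂ) ^ c)).congr_deriv ?_
  rw [cpow_add _ _ ht', cpow_one]
  ring

lemma hasDerivAt_integral_cpow_mul_exp_neg_mul {c r : ℂ} (hc : -1 < c.re) (hr : 0 < r.re) :
    HasDerivAt (fun r : ℂ => ∫ t in Ioi (0 : ℝ), (t : ℂ) ^ c * cexp (-(r * t)))
      (∫ t in Ioi (0 : ℝ), -((t : ℂ) ^ (c + 1) * cexp (-(r * t)))) r := by
  have hbound : IntegrableOn (fun t : ℝ => t ^ (c + 1).re * Real.exp (-(r.re / 2) * t)) (Ioi 0) :=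
    integrableOn_rpow_mul_exp_neg_mul (by rw [add_re, one_re]; linarith) (half_pos hr)
  refine (hasDerivAt_integral_of_dominated_loc_of_deriv_le
    (F := fun (z : ℂ) (t : ℝ) => (t : ℂ) ^ c * cexp (-(z * t)))
    (F' := fun z t => -((t : ℂ) ^ (c + 1) * cexp (-(z * t))))
    (Metric.ball_mem_nhds r (half_pos hr))
    (.of_forall fun _ => aestronglyMeasurable_cpow_mul_exp_neg_mul _ _)
    (integrableOn_cpow_mul_exp_neg_mul hc hr)
    (aestronglyMeasurable_cpow_mul_exp_neg_mul _ _).neg ?_ hbound ?_).2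
  · filter_upwards [ae_restrict_mem measurableSet_Ioi] with t ht z hz
    have hre : r.re / 2 ≤ z.re := by
      have := (abs_le.1 ((abs_re_le_norm (z - r)).trans (mem_ball_iff_norm.1 hz).le)).1
      rw [sub_re] at this
      linarith
    rw [norm_neg, norm_cpow_mul_exp_neg_mul ht]
    have ht₀ : 0 ≤ t := le_of_lt ht
    gcongr
  · filter_upwards [ae_restrict_mem measurableSet_Ioi] with t ht z _
    exact hasDerivAt_cpow_mul_exp_neg_mul ht c z

/-- Both sides are holomorphic in `r` on the right half-plane and agree for real `r`. -/
lemma integral_cpow_mul_exp_neg_mul {a r : ℂ} (ha : 0 < a.re) (hr : 0 < r.re) :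
    ∫ t in Ioi (0 : ℝ), (t : ℂ) ^ (a - 1) * cexp (-(r * t)) = r ^ (-a) * Gamma a := by
  have hopen : IsOpen {z : ℂ | 0 < z.re} := isOpen_lt continuous_const continuous_re
  have hleft : DifferentiableOn ℂ
      (fun r : ℂ => ∫ t in Ioi (0 : ℝ), (t : ℂ) ^ (a - 1) * cexp (-(r * t)))
      {z : ℂ | 0 < z.re} := fun z hz =>
    (hasDerivAt_integral_cpow_mul_exp_neg_mul (by simpa using ha)
      hz).differentiableAt.differentiableWithinAt
  have hright : DifferentiableOn ℂ (fun r : ℂ => r ^ (-a) * Gamma a) {z : ℂ | 0 < z.re} :=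
    fun z hz => (((hasDerivAt_id z).cpow_const
      (Or.inl hz)).differentiableAt.mul_const _).differentiableWithinAt
  have hreal : ∀ x : ℝ, 0 < x →
      ∫ t in Ioi (0 : ℝ), (t : ℂ) ^ (a - 1) * cexp (-(x * t)) = (x : ℂ) ^ (-a) * Gamma a := by
    intro x hx
    rw [integral_cpow_mul_exp_neg_mul_Ioi ha hx, one_div, cpow_neg,
      inv_cpow _ _ (by simpa [arg_ofReal_of_nonneg hx.le] using Real.pi_pos.ne)]
  have hfreq : ∃ᶠ z in 𝓝[≠] (1 : ℂ),
      ∫ t in Ioi (0 : ℝ), (t : ℂ) ^ (a - 1) * cexp (-(z * t)) = z ^ (-a) * Gamma a := by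
    have hlim : Tendsto ((↑) : ℝ → ℂ) (𝓝[≠] 1) (𝓝[≠] (1 : ℂ)) := by
      rw [← ofReal_one]
      exact continuous_ofReal.continuousWithinAt.tendsto_nhdsWithin fun x hx => by simpa using hx
    have hpos : ∀ᶠ x in 𝓝[≠] (1 : ℝ), 0 < x := nhdsWithin_le_nhds (lt_mem_nhds one_pos)
    exact hlim.frequently (hpos.mono hreal).frequently
  exact (hleft.analyticOnNhd hopen).eqOn_of_preconnected_of_frequently_eq
    (hright.analyticOnNhd hopen) (convex_halfSpace_re_gt 0).isPreconnected (by simp) hfreq hr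

/-- The unnormalized density `t ^ (a - 1) * exp (-t)` of the gamma distribution, supported on
`(0, ∞)`, with a complex shape parameter `a`. Its Fourier transform gives `(1 + I * x) ^ (-a)`. -/
noncomputable def gammaDensity (a : ℂ) : ℝ → ℂ :=
  (Ioi 0).indicator fun t => (t : ℂ) ^ (a - 1) * cexp (-t)

lemma integrable_gammaDensity {a : ℂ} (ha : 0 < a.re) : Integrable (gammaDensity a) := by
  rw [gammaDensity, integrable_indicator_iff measurableSet_Ioi]
  simpa using integrableOn_cpow_mul_exp_neg_mul (c := a - 1) (r := 1) (by simpa using ha) one_pos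

lemma continuous_gammaDensity {a : ℂ} (ha : 1 < a.re) : Continuous (gammaDensity a) := by
  have hpow : 0 < (a - 1).re := by simpa using ha
  refine continuous_indicator (fun t ht => ?_) ?_
  · obtain rfl : t = 0 := by simpa using ht
    have : a - 1 ≠ 0 := fun h => by simp [h] at hpow
    simp [zero_cpow this]
  · exact ((continuous_ofReal_cpow_const hpow).mul (by fun_prop)).continuousOn

lemma fourier_gammaDensity {a : ℂ} (ha : 0 < a.re) (ξ : ℝ) :
    𝓕 (gammaDensity a) ξ = (1 + I * (2 * Real.pi * ξ : ℝ)) ^ (-a) * Gamma a := by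
  rw [← integral_cpow_mul_exp_neg_mul ha (by simp), Real.fourier_eq',
    ← integral_indicator measurableSet_Ioi]
  congr with t
  by_cases ht : t ∈ Ioi 0
  · simp only [gammaDensity, indicator_of_mem ht, smul_eq_mul]
    rw [mul_left_comm, ← Complex.exp_add]
    congr 2
    simp
    ring
  · simp only [gammaDensity, indicator_of_notMem ht, smul_zero]

lemma integral_gammaDensity_mul_gammaDensity {a b : ℂ} (hab : 1 < (a + b).re) :
    ∫ t, gammaDensity a t * gammaDensity b t = 2 ^ (1 - a - b) * Gamma (a + b - 1) := by
  have hre : 0 < (a + b - 1).re := by rw [sub_re, one_re]; linarith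
  rw [show 1 - a - b = -(a + b - 1) by ring, ← integral_cpow_mul_exp_neg_mul hre (by simp),
    ← integral_indicator measurableSet_Ioi]
  congr with t
  by_cases ht : t ∈ Ioi 0
  · have ht' : (t : ℂ) ≠ 0 := ofReal_ne_zero.2 (ne_of_gt ht)
    simp only [gammaDensity, indicator_of_mem ht]
    rw [mul_mul_mul_comm, ← Complex.exp_add, ← cpow_add _ _ ht']
    ring_nf
  · simp only [gammaDensity, indicator_of_notMem ht, mul_zero]

section Parseval

variable {V E : Type*} [NormedAddCommGroup V] [InnerProductSpace ℝ V] [FiniteDimensional ℝ V]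
  [MeasurableSpace V] [BorelSpace V] [NormedAddCommGroup E] [NormedSpace ℂ E] [CompleteSpace E]

lemma integral_fourier_smul_fourierInv {f : V → ℂ} {g : V → E} (hf : Integrable f)
    (hg : Continuous g) (hg' : Integrable g) (hg'' : Integrable (𝓕 g)) :
    ∫ ξ, 𝓕 f ξ • 𝓕⁻ g ξ = ∫ v, f v • g v := by
  have hinv : Integrable (𝓕⁻ g) :=
    hg''.comp_neg.congr (.of_forall fun ξ => (Real.fourierInv_eq_fourier_neg g ξ).symm)
  calc ∫ ξ, 𝓕 f ξ • 𝓕⁻ g ξ = ∫ v, f v • 𝓕 (𝓕⁻ g) v := by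
        simpa using! VectorFourier.integral_fourierIntegral_smul_eq_flip (L := innerₗ V)
          Real.continuous_fourierChar continuous_inner hf hinv
    _ = ∫ v, f v • g v := by rw [hg.fourier_fourierInv_eq hg' hg'']

end Parseval

/-- The one-variable weight of the Cauchy–Selberg integral. The bases have real part `1`, so the
principal powers are smooth in `x`. -/
noncomputable def cauchyWeight (a b : ℂ) (x : ℝ) : ℂ :=
  (1 + I * x) ^ (-a) * (1 - I * x) ^ (-b)

lemma one_add_I_mul_mem_slitPlane (x : ℝ) : 1 + I * (x : ℂ) ∈ slitPlane := Or.inl (by simp)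

lemma one_sub_I_mul_mem_slitPlane (x : ℝ) : 1 - I * (x : ℂ) ∈ slitPlane := Or.inl (by simp)

lemma cauchyWeight_neg (a b : ℂ) (x : ℝ) : cauchyWeight a b (-x) = cauchyWeight b a x := by
  simp [cauchyWeight, mul_comm, sub_eq_add_neg]

lemma continuous_cauchyWeight (a b : ℂ) : Continuous (cauchyWeight a b) :=
  (Continuous.cpow (by fun_prop) (by fun_prop) one_add_I_mul_mem_slitPlane).mul
    (Continuous.cpow (by fun_prop) (by fun_prop) one_sub_I_mul_mem_slitPlane)

/-- Stated along `⊤`, this is a uniform bound on the whole line. -/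
lemma cauchyWeight_isBigO (a b : ℂ) :
    cauchyWeight a b =O[⊤] fun x : ℝ => (1 + ‖x‖ ^ 2) ^ (-(a + b).re / 2) := by
  have hplus (x : ℝ) : ‖1 + I * (x : ℂ)‖ = (1 + ‖x‖ ^ 2) ^ (1 / 2 : ℝ) := by
    rw [← Real.sqrt_eq_rpow, norm_def, normSq_apply]; simp [sq]
  have hminus (x : ℝ) : ‖1 - I * (x : ℂ)‖ = (1 + ‖x‖ ^ 2) ^ (1 / 2 : ℝ) := by
    rw [← Real.sqrt_eq_rpow, norm_def, normSq_apply]; simp [sq]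
  refine ((isBigO_cpow_rpow isBoundedUnder_const).mul
    (isBigO_cpow_rpow isBoundedUnder_const)).congr_right fun x => ?_
  have hpos : 0 < 1 + ‖x‖ ^ 2 := by positivity
  rw [hplus, hminus, ← Real.rpow_mul hpos.le, ← Real.rpow_mul hpos.le, ← Real.rpow_add hpos]
  congr 1
  simp only [neg_re, add_re]
  ring

lemma integrable_cauchyWeight {a b : ℂ} (hab : 1 < (a + b).re) :
    Integrable (cauchyWeight a b) :=
  ((cauchyWeight_isBigO a b).mono le_top).integrable
    (continuous_cauchyWeight a b).aestronglyMeasurable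
    (integrable_rpow_neg_one_add_norm_sq (by simpa using hab))

lemma tendsto_cauchyWeight_cobounded {a b : ℂ} (hab : 0 < (a + b).re) :
    Tendsto (cauchyWeight a b) (Bornology.cobounded ℝ) (𝓝 0) := by
  have hnorm : Tendsto (fun x : ℝ => 1 + ‖x‖ ^ 2) (Bornology.cobounded ℝ) atTop :=
    tendsto_atTop_add_const_left _ _
      ((tendsto_pow_atTop two_ne_zero).comp tendsto_norm_cobounded_atTop)
  refine ((cauchyWeight_isBigO a b).mono le_top).trans_tendsto ?_
  simpa only [neg_div, Function.comp_def] using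
    (tendsto_rpow_neg_atTop (half_pos hab)).comp hnorm

lemma cauchyWeight_add_cauchyWeight (a b : ℂ) (x : ℝ) :
    cauchyWeight a (b + 1) x + cauchyWeight (a + 1) b x = 2 * cauchyWeight (a + 1) (b + 1) x := by
  have hcpow {z : ℂ} (hz : z ∈ slitPlane) (w : ℂ) : z ^ (-w) = z ^ (-(w + 1)) * z := by
    rw [neg_add', cpow_sub _ _ (slitPlane_ne_zero hz), cpow_one,
      div_mul_cancel₀ _ (slitPlane_ne_zero hz)]
  simp only [cauchyWeight, hcpow (one_add_I_mul_mem_slitPlane x) a,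
    hcpow (one_sub_I_mul_mem_slitPlane x) b]
  ring

lemma hasDerivAt_cauchyWeight (a b : ℂ) (x : ℝ) :
    HasDerivAt (cauchyWeight a b)
      (I * (b * cauchyWeight a (b + 1) x - a * cauchyWeight (a + 1) b x)) x := by
  have hlin : HasDerivAt (fun z : ℂ => I * z) I x := hasDerivAt_const_mul I
  have hplus := (hlin.const_add 1).cpow_const (c := -a) (one_add_I_mul_mem_slitPlane x)
  have hminus := (hlin.const_sub 1).cpow_const (c := -b) (one_sub_I_mul_mem_slitPlane x)
  refine (hplus.mul hminus).comp_ofReal.congr_deriv ?_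
  simp only [cauchyWeight, neg_add']
  ring

/-- Integrate the derivative of `cauchyWeight a (b - 1)`, which vanishes at infinity. -/
lemma integral_cauchyWeight_add_one {a b : ℂ} (hab : 1 < (a + b).re) :
    2 * a * ∫ x, cauchyWeight (a + 1) b x = (a + b - 1) * ∫ x, cauchyWeight a b x := by
  obtain ⟨b, rfl⟩ : ∃ c, b = c + 1 := ⟨b - 1, (sub_add_cancel b 1).symm⟩
  simp only [add_re, one_re] at hab
  have hint₁ : Integrable (cauchyWeight (a + 1) (b + 1)) :=
    integrable_cauchyWeight (by simp only [add_re, one_re]; linarith)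
  have hint₀ : Integrable (cauchyWeight a (b + 1)) :=
    integrable_cauchyWeight (by simp only [add_re, one_re]; linarith)
  have hderiv (x : ℝ) : HasDerivAt (cauchyWeight a b)
      (I * ((a + b) * cauchyWeight a (b + 1) x - 2 * a * cauchyWeight (a + 1) (b + 1) x)) x := by
    refine (hasDerivAt_cauchyWeight a b x).congr_deriv ?_
    linear_combination (-I * a) * cauchyWeight_add_cauchyWeight a b x
  have hlim : Tendsto (cauchyWeight a b) (atBot ⊔ atTop) (𝓝 0) :=
    IsOrderBornology.cobounded_eq (α := ℝ) ▸
      tendsto_cauchyWeight_cobounded (by rw [add_re]; linarith)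
  have hzero := integral_of_hasDerivAt_of_tendsto hderiv
    (((hint₀.const_mul _).sub (hint₁.const_mul _)).const_mul I)
    (hlim.mono_left le_sup_left) (hlim.mono_left le_sup_right)
  rw [integral_const_mul, integral_sub (hint₀.const_mul _) (hint₁.const_mul _),
    integral_const_mul, integral_const_mul, sub_self] at hzero
  linear_combination -(mul_eq_zero_iff_left I_ne_zero).1 hzero

/-- The closed form of Cauchy's beta integral `∫ x, cauchyWeight a b x`, valid for
`1 < (a + b).re`. Where `Gamma a` or `Gamma b` has a pole, the value is `0`, as it should be:
there both `1 / Γ` and the division by `Gamma _ = 0` give `0`. -/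
noncomputable def cauchyBeta (a b : ℂ) : ℂ :=
  2 * Real.pi * 2 ^ (1 - a - b) * Gamma (a + b - 1) / (Gamma a * Gamma b)

lemma cauchyBeta_comm (a b : ℂ) : cauchyBeta a b = cauchyBeta b a := by
  rw [cauchyBeta, cauchyBeta, sub_right_comm, add_comm a b, mul_comm (Gamma a)]

lemma cauchyBeta_add_one {a b : ℂ} (hab : a + b - 1 ≠ 0) :
    2 * a * cauchyBeta (a + 1) b = (a + b - 1) * cauchyBeta a b := by
  have hpow : (2 : ℂ) ^ (1 - a - b) = 2 ^ (1 - (a + 1) - b) * 2 := by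
    rw [show 1 - a - b = 1 - (a + 1) - b + 1 by ring, cpow_add _ _ two_ne_zero, cpow_one]
  have hGamma : Gamma (a + 1 + b - 1) = (a + b - 1) * Gamma (a + b - 1) := by
    rw [← Gamma_add_one _ hab]
    ring_nf
  simp only [cauchyBeta, div_eq_mul_inv, mul_inv, hpow, hGamma,
    one_div_Gamma_eq_self_mul_one_div_Gamma_add_one a]
  ring

lemma integral_cauchyWeight_of_re_pos {a b : ℂ} (ha : 0 < a.re) (hb : 1 < b.re) :
    ∫ x, cauchyWeight a b x = cauchyBeta a b := by
  have hb₀ : 0 < b.re := one_pos.trans hb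
  have hfourierInv (ξ : ℝ) : 𝓕⁻ (gammaDensity b) ξ =
      (1 - I * (2 * Real.pi * ξ : ℝ)) ^ (-b) * Gamma b := by
    rw [Real.fourierInv_eq_fourier_neg, fourier_gammaDensity hb₀]
    simp [sub_eq_add_neg]
  have hfourier : Integrable (𝓕 (gammaDensity b)) := by
    have hweight : Integrable (cauchyWeight b 0) := integrable_cauchyWeight (by simpa using hb)
    refine ((hweight.comp_mul_left' Real.two_pi_pos.ne').mul_const (Gamma b)).congr
      (.of_forall fun ξ => ?_)
    simp [cauchyWeight, fourier_gammaDensity hb₀]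
  have hparseval : 2 ^ (1 - a - b) * Gamma (a + b - 1) =
      ((2 * Real.pi)⁻¹ : ℝ) * (∫ x, cauchyWeight a b x) * (Gamma a * Gamma b) := by
    calc 2 ^ (1 - a - b) * Gamma (a + b - 1)
      _ = ∫ t, gammaDensity a t * gammaDensity b t :=
        (integral_gammaDensity_mul_gammaDensity (by rw [add_re]; linarith)).symm
      _ = ∫ ξ, 𝓕 (gammaDensity a) ξ * 𝓕⁻ (gammaDensity b) ξ :=
        (integral_fourier_smul_fourierInv (integrable_gammaDensity ha)
          (continuous_gammaDensity hb) (integrable_gammaDensity hb₀) hfourier).symm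
      _ = ∫ ξ : ℝ, cauchyWeight a b (2 * Real.pi * ξ) * (Gamma a * Gamma b) := by
        congr with ξ
        rw [fourier_gammaDensity ha, hfourierInv, cauchyWeight]
        ring
      _ = _ := by
        rw [integral_mul_const, Measure.integral_comp_mul_left,
          abs_of_pos (inv_pos.2 Real.two_pi_pos), real_smul]
  have hpi : (Real.pi : ℂ) ≠ 0 := ofReal_ne_zero.2 Real.pi_ne_zero
  have hGa := Gamma_ne_zero_of_re_pos ha
  have hGb := Gamma_ne_zero_of_re_pos hb₀
  rw [cauchyBeta, mul_assoc (2 * (Real.pi : ℂ)), hparseval]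
  push_cast
  field_simp

lemma re_induction {P : ℂ → Prop} {c : ℝ} (d : ℝ) (large : ∀ z : ℂ, d < z.re → P z)
    (step : ∀ z : ℂ, c < z.re → P (z + 1) → P z) {z : ℂ} (hz : c < z.re) : P z := by
  obtain ⟨n, hn⟩ := exists_nat_gt (d - z.re)
  induction n generalizing z with
  | zero => exact large z (by simpa using hn)
  | succ n ih =>
    push_cast at hn
    exact step z hz (ih (by rw [add_re, one_re]; linarith) (by rw [add_re, one_re]; linarith))

lemma integral_cauchyWeight_of_add_one {a b : ℂ} (hab : 1 < (a + b).re)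
    (h : ∫ x, cauchyWeight (a + 1) b x = cauchyBeta (a + 1) b) :
    ∫ x, cauchyWeight a b x = cauchyBeta a b := by
  have hne : a + b - 1 ≠ 0 := fun h0 => by
    rw [sub_eq_zero.1 h0, one_re] at hab
    exact hab.false
  refine mul_left_cancel₀ hne ?_
  rw [← integral_cauchyWeight_add_one hab, h, cauchyBeta_add_one hne]

theorem integral_cauchyWeight {a b : ℂ} (hab : 1 < (a + b).re) :
    ∫ x, cauchyWeight a b x = cauchyBeta a b := by
  have hswap (a b : ℂ) : ∫ x, cauchyWeight a b x = ∫ x, cauchyWeight b a x := by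
    rw [← integral_neg_eq_self]
    simp_rw [cauchyWeight_neg]
  have hlarge {a b : ℂ} (hb : 1 < b.re) (ha : 1 - b.re < a.re) :
      ∫ x, cauchyWeight a b x = cauchyBeta a b :=
    re_induction (P := fun a => ∫ x, cauchyWeight a b x = cauchyBeta a b) 0
      (fun _ ha => integral_cauchyWeight_of_re_pos ha hb)
      (fun _ ha => integral_cauchyWeight_of_add_one (by rw [add_re]; linarith)) ha
  rw [add_re] at hab
  refine re_induction (P := fun b => ∫ x, cauchyWeight a b x = cauchyBeta a b) (c := 1 - a.re)
    (max 1 (1 - a.re)) (fun b hb => ?_) (fun b hb h => ?_) (by linarith)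
  · rw [max_lt_iff] at hb
    exact hlarge hb.1 (by linarith)
  · rw [hswap, cauchyBeta_comm] at h ⊢
    exact integral_cauchyWeight_of_add_one (by rw [add_re]; linarith) h

section Andreief

variable {ι α 𝕜 : Type*} [Fintype ι] [DecidableEq ι] [MeasurableSpace α] [RCLike 𝕜]
  {μ : Measure α} [SigmaFinite μ] {f g : ι → α → 𝕜}

open Equiv.Perm

lemma det_mul_det_eq_sum_sum_prod {R : Type*} [CommRing R] (A B : Matrix ι ι R) :
    A.det * B.det = ∑ σ : Equiv.Perm ι, ∑ τ : Equiv.Perm ι,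
      ((sign σ : ℤ) : R) * ((sign τ : ℤ) : R) * ∏ m, A m (σ m) * B m (τ m) := by
  rw [← Matrix.det_transpose A, ← Matrix.det_transpose B, Matrix.det_apply', Matrix.det_apply',
    Finset.sum_mul_sum]
  simp only [Matrix.transpose_apply, Finset.prod_mul_distrib, mul_mul_mul_comm]

lemma integrable_sign_mul_sign_mul_prod (hfg : ∀ i j, Integrable (fun x => f i x * g j x) μ)
    (σ τ : Equiv.Perm ι) :
    Integrable (fun x : ι → α => ((sign σ : ℤ) : 𝕜) * ((sign τ : ℤ) : 𝕜) *
      ∏ m, f (σ m) (x m) * g (τ m) (x m)) (Measure.pi fun _ => μ) :=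
  (Integrable.fintype_prod fun m => hfg (σ m) (τ m)).const_mul _

lemma integrable_det_mul_det (hfg : ∀ i j, Integrable (fun x => f i x * g j x) μ) :
    Integrable (fun x : ι → α => (Matrix.of fun m i => f i (x m)).det *
      (Matrix.of fun m i => g i (x m)).det) (Measure.pi fun _ => μ) := by
  simp only [det_mul_det_eq_sum_sum_prod, Matrix.of_apply]
  exact integrable_finsetSum _ fun σ _ => integrable_finsetSum _ fun τ _ =>
    integrable_sign_mul_sign_mul_prod hfg σ τ

/-- **Andréief's identity**. -/
theorem integral_det_mul_det (hfg : ∀ i j, Integrable (fun x => f i x * g j x) μ) :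
    ∫ x : ι → α, (Matrix.of fun m i => f i (x m)).det * (Matrix.of fun m i => g i (x m)).det
        ∂Measure.pi (fun _ => μ) =
      (Fintype.card ι).factorial * (Matrix.of fun i j => ∫ x, f i x * g j x ∂μ).det := by
  have hint := integrable_sign_mul_sign_mul_prod hfg
  have hrow (σ : Equiv.Perm ι) : ∑ τ : Equiv.Perm ι, ((sign σ : ℤ) : 𝕜) * ((sign τ : ℤ) : 𝕜) *
      ∏ m, ∫ x, f (σ m) x * g (τ m) x ∂μ = (Matrix.of fun i j => ∫ x, f i x * g j x ∂μ).det := by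
    have hsign : ((sign σ : ℤ) : 𝕜) * ((sign σ : ℤ) : 𝕜) = 1 := by
      rw [← Int.cast_mul, Int.units_coe_mul_self, Int.cast_one]
    rw [← one_mul (Matrix.det _), ← hsign, mul_assoc, ← Matrix.det_permute,
      ← Matrix.det_transpose, Matrix.det_apply', Finset.mul_sum]
    simp only [Matrix.transpose_apply, Matrix.submatrix_apply, Matrix.of_apply, id, mul_assoc]
  have hterm (σ τ : Equiv.Perm ι) : ∫ x : ι → α, ((sign σ : ℤ) : 𝕜) * ((sign τ : ℤ) : 𝕜) *
      ∏ m, f (σ m) (x m) * g (τ m) (x m) ∂Measure.pi (fun _ => μ) =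
        ((sign σ : ℤ) : 𝕜) * ((sign τ : ℤ) : 𝕜) * ∏ m, ∫ x, f (σ m) x * g (τ m) x ∂μ := by
    rw [integral_const_mul,
      integral_fintype_prod_eq_prod fun m y => f (σ m) y * g (τ m) y]
  simp only [det_mul_det_eq_sum_sum_prod, Matrix.of_apply]
  rw [integral_finsetSum _ fun σ _ => integrable_finsetSum _ fun τ _ => hint σ τ]
  simp_rw [integral_finsetSum _ fun τ _ => hint _ τ, hterm, hrow]
  simp [Fintype.card_perm]

end Andreief

lemma ne_neg_natCast_of_re_pos {z : ℂ} (hz : 0 < z.re) (m : ℕ) : z ≠ -m := by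
  rintro rfl
  rw [neg_re, natCast_re, neg_pos] at hz
  exact hz.not_ge m.cast_nonneg

section Determinants

open Matrix

lemma det_vandermonde_natCast {R : Type*} [CommRing R] (n : ℕ) :
    (vandermonde fun i : Fin n => ((i : ℕ) : R)).det = ∏ i : Fin n, ((i : ℕ).factorial : R) := by
  rcases n with _ | n
  · simp
  · rw [det_vandermonde_id_eq_superFactorial,
      Fin.prod_univ_eq_prod_range (fun i => (i.factorial : R)), ← Nat.cast_prod,
      Nat.prod_range_succ_factorial]

/-- `Γ(s + i + j) / Γ(s + i)` is a monic polynomial of degree `j` in `i`. -/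
lemma det_Gamma_add (n : ℕ) {s : ℂ} (hs : ∀ m : ℕ, s ≠ -m) :
    (of fun i j : Fin n => Gamma (s + (i : ℕ) + (j : ℕ))).det =
      ∏ i : Fin n, Gamma (s + (i : ℕ)) * ((i : ℕ).factorial : ℂ) := by
  have hs' (i m : ℕ) : s + i ≠ -m := fun h => hs (m + i) (by push_cast; linear_combination h)
  have hcol : (of fun i j : Fin n => Gamma (s + (i : ℕ) + (j : ℕ))) =
      of fun i j : Fin n => Gamma (s + (i : ℕ)) *
        of (fun i j : Fin n => (ascPochhammer ℂ (j : ℕ)).eval ((i : ℕ) + s)) i j := by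
    ext i j
    simp only [of_apply]
    rw [add_comm ((i : ℕ) : ℂ) s, ← Gamma_add_nat_div_Gamma_eq _ (hs' i),
      mul_div_cancel₀ _ (Gamma_ne_zero (hs' i))]
  rw [hcol, det_mul_column, ← det_eval_matrixOfPolynomials_eq_det_vandermonde
    (fun i : Fin n => ((i : ℕ) : ℂ) + s) (fun j => ascPochhammer ℂ (j : ℕ))
    (fun _ => ascPochhammer_natDegree _ _) (fun _ => monic_ascPochhammer _ _),
    det_vandermonde_add, det_vandermonde_natCast, Finset.prod_mul_distrib]

lemma det_Gamma_sub {n : ℕ} {s : ℂ} (hs : ∀ m : ℕ, s - 2 * (n - 1) ≠ -m) :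
    (of fun i j : Fin n => Gamma (s - (i : ℕ) - (j : ℕ))).det =
      ∏ i ∈ Finset.range n, Gamma (s - (n - 1) - i) * (i.factorial : ℂ) := by
  have hcast {i : ℕ} (hi : i < n) : ((n - (i + 1) : ℕ) : ℂ) = n - 1 - i := by
    rw [Nat.cast_sub hi, Nat.cast_succ]
    ring
  calc (of fun i j : Fin n => Gamma (s - (i : ℕ) - (j : ℕ))).det
    _ = (of fun i j : Fin n => Gamma (s - 2 * (n - 1) + (i : ℕ) + (j : ℕ))).det := by
      rw [← det_submatrix_equiv_self Fin.revPerm]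
      congr with i j
      simp only [submatrix_apply, of_apply, Fin.revPerm_apply, Fin.val_rev, hcast (Fin.is_lt _)]
      ring_nf
    _ = (∏ i ∈ Finset.range n, Gamma (s - 2 * (n - 1) + i)) *
          ∏ i ∈ Finset.range n, (i.factorial : ℂ) := by
      rw [det_Gamma_add n hs, Finset.prod_mul_distrib,
        Fin.prod_univ_eq_prod_range (fun i => Gamma (s - 2 * (n - 1) + i)),
        Fin.prod_univ_eq_prod_range (fun i => (i.factorial : ℂ))]
    _ = ∏ i ∈ Finset.range n, Gamma (s - (n - 1) - i) * (i.factorial : ℂ) := by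
      rw [Finset.prod_mul_distrib, ← Finset.prod_range_reflect]
      congr 1
      refine Finset.prod_congr rfl fun i hi => ?_
      rw [Nat.sub_sub, add_comm 1, hcast (Finset.mem_range.1 hi)]
      ring_nf

lemma det_cpow_neg_sub {n : ℕ} {z : Fin n → ℂ} (hz : ∀ m, z m ≠ 0) (c : ℂ) :
    (of fun m i : Fin n => z m ^ (-(c - (i : ℕ)))).det =
      (∏ m, z m ^ (-c)) * (vandermonde z).det := by
  rw [← det_mul_column]
  congr with m i
  rw [vandermonde_apply, ← cpow_natCast, ← cpow_add _ _ (hz m)]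
  ring_nf

lemma prod_sq_sub_eq_det_mul_det {n : ℕ} (x : Fin n → ℝ) :
    ∏ j : Fin n, ∏ l ∈ Finset.Ioi j, (((x l - x j) ^ 2 : ℝ) : ℂ) =
      (vandermonde fun m => 1 + I * (x m : ℂ)).det *
        (vandermonde fun m => 1 - I * (x m : ℂ)).det := by
  simp only [det_vandermonde, ← Finset.prod_mul_distrib]
  refine Finset.prod_congr rfl fun j _ => Finset.prod_congr rfl fun l _ => ?_
  push_cast
  linear_combination ((x l : ℂ) - x j) ^ 2 * I_sq

lemma prod_sq_sub_mul_prod_cauchyWeight {n : ℕ} (a b : ℂ) (x : Fin n → ℝ) :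
    (∏ j : Fin n, ∏ l ∈ Finset.Ioi j, (((x l - x j) ^ 2 : ℝ) : ℂ)) *
        ∏ m : Fin n, cauchyWeight a b (x m) =
      (of fun m i : Fin n => (1 + I * (x m : ℂ)) ^ (-(a - (i : ℕ)))).det *
        (of fun m i : Fin n => (1 - I * (x m : ℂ)) ^ (-(b - (i : ℕ)))).det := by
  rw [det_cpow_neg_sub (fun m => slitPlane_ne_zero (one_add_I_mul_mem_slitPlane (x m))),
    det_cpow_neg_sub (fun m => slitPlane_ne_zero (one_sub_I_mul_mem_slitPlane (x m))),
    prod_sq_sub_eq_det_mul_det]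
  simp only [cauchyWeight, Finset.prod_mul_distrib]
  ring

end Determinants

lemma cauchyBeta_sub_natCast_sub_natCast (a b : ℂ) (i j : ℕ) :
    cauchyBeta (a - i) (b - j) = 2 * Real.pi * 2 ^ (1 - a - b) * 2 ^ i * (Gamma (a - i))⁻¹ *
      (2 ^ j * (Gamma (b - j))⁻¹ * Gamma (a + b - 1 - i - j)) := by
  rw [cauchyBeta, show 1 - (a - i) - (b - j) = 1 - a - b + i + j by ring,
    cpow_add _ _ two_ne_zero, cpow_add _ _ two_ne_zero, cpow_natCast, cpow_natCast,
    show a - i + (b - j) - 1 = a + b - 1 - i - j by ring, div_eq_mul_inv, mul_inv]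
  ring

lemma det_cauchyBeta {n : ℕ} {a b : ℂ} (hab : ∀ m : ℕ, a + b - 1 - 2 * (n - 1) ≠ -m) :
    (Matrix.of fun i j : Fin n => cauchyBeta (a - (i : ℕ)) (b - (j : ℕ))).det =
      (2 * Real.pi) ^ n * 2 ^ (n * (n - a - b)) * ∏ i ∈ Finset.range n,
        (i.factorial : ℂ) * (Gamma (a + b - n - i) / (Gamma (a - i) * Gamma (b - i))) := by
  have hpow : (2 : ℂ) ^ (n * (n - a - b)) =
      (2 ^ (1 - a - b)) ^ n *
        ((∏ i ∈ Finset.range n, 2 ^ i) * ∏ i ∈ Finset.range n, 2 ^ i) := by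
    have hcast : ((n * (n - 1) : ℕ) : ℂ) = n * (n - 1) := by cases n <;> simp
    rw [Finset.prod_pow_eq_pow_sum, ← pow_add, ← mul_two, Finset.sum_range_id_mul_two,
      ← cpow_nat_mul, ← cpow_natCast, ← cpow_add _ _ two_ne_zero, hcast]
    ring_nf
  have hGamma : (Matrix.of fun i j : Fin n => Gamma (a + b - 1 - (i : ℕ) - (j : ℕ))).det =
      ∏ i ∈ Finset.range n, Gamma (a + b - n - i) * (i.factorial : ℂ) := by
    rw [det_Gamma_sub hab]
    refine Finset.prod_congr rfl fun i _ => ?_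
    ring_nf
  calc (Matrix.of fun i j : Fin n => cauchyBeta (a - (i : ℕ)) (b - (j : ℕ))).det
    _ = (∏ i ∈ Finset.range n, 2 * Real.pi * 2 ^ (1 - a - b) * 2 ^ i * (Gamma (a - i))⁻¹) *
          ((∏ j ∈ Finset.range n, 2 ^ j * (Gamma (b - j))⁻¹) *
            ∏ i ∈ Finset.range n, Gamma (a + b - n - i) * (i.factorial : ℂ)) := by
      simp only [cauchyBeta_sub_natCast_sub_natCast]
      rw [← hGamma, ← Fin.prod_univ_eq_prod_range, ← Fin.prod_univ_eq_prod_range,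
        ← Matrix.det_mul_row, ← Matrix.det_mul_column]
      rfl
    _ = _ := by
      simp only [Finset.prod_mul_distrib, Finset.prod_const, Finset.card_range, hpow,
        div_eq_mul_inv, mul_inv, mul_pow]
      ring

lemma factorial_mul_prod_factorial (n : ℕ) :
    n.factorial * ∏ i ∈ Finset.range n, i.factorial =
      ∏ i ∈ Finset.range n, (i + 1).factorial := by
  rw [mul_comm, ← Finset.prod_range_succ, Finset.prod_range_succ', Nat.factorial_zero, mul_one]

lemma prod_range_succ_div {G : Type*} [CommGroupWithZero G] {f : ℕ → G}
    (hf : ∀ i, f (i + 1) ≠ 0) (n : ℕ) :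
    ∏ i ∈ Finset.range (n + 1), f (i + 1) / f i = f (n + 1) / f 0 := by
  induction n with
  | zero => simp
  | succ n ih => rw [Finset.prod_range_succ, ih, mul_comm, div_mul_div_cancel₀ (hf n)]

lemma prod_Gamma_sub (n : ℕ) :
    ∏ i ∈ Finset.range n, Gamma ((n + 1 : ℕ) - i) =
      ∏ i ∈ Finset.range n, ((i + 1).factorial : ℂ) := by
  rw [← Finset.prod_range_reflect]
  refine Finset.prod_congr rfl fun i hi => ?_
  rw [← Gamma_nat_eq_factorial, Nat.sub_sub, Nat.cast_sub (by have := Finset.mem_range.1 hi; lia)]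
  push_cast
  ring_nf

lemma prod_Gamma_div_Gamma {s : ℂ} (hs : ∀ m : ℕ, s + 1 ≠ -m) (n : ℕ) :
    ∏ i ∈ Finset.range (n + 1), Gamma (s + (n + 1) - i) / Gamma (s + n - i) =
      Gamma (s + (n + 1)) / Gamma s := by
  have hne (i : ℕ) : Gamma (s + (i + 1 : ℕ)) ≠ 0 := Gamma_ne_zero fun m h => hs (m + i) (by
    push_cast at h ⊢
    linear_combination h)
  calc ∏ i ∈ Finset.range (n + 1), Gamma (s + (n + 1) - i) / Gamma (s + n - i)
    _ = ∏ i ∈ Finset.range (n + 1), Gamma (s + (i + 1 : ℕ)) / Gamma (s + i) := by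
      rw [← Finset.prod_range_reflect]
      refine Finset.prod_congr rfl fun i hi => ?_
      rw [add_tsub_cancel_right, Nat.cast_sub (Finset.mem_range_succ_iff.1 hi), sub_sub_eq_add_sub]
      push_cast
      ring_nf
    _ = Gamma (s + (n + 1)) / Gamma s := by
      rw [prod_range_succ_div (f := fun i : ℕ => Gamma (s + i)) hne]
      simp

lemma prod_factorial_mul_Gamma_div {N : ℕ} (hN : 2 ≤ N) {k : ℂ} (hk : ∀ m : ℕ, k + 3 ≠ -m) :
    ∏ i ∈ Finset.range (N - 1), ((i + 1).factorial : ℂ) *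
        (Gamma (k + N + N - (N - 1 : ℕ) - i) / (Gamma (k + N - i) * Gamma (N - i))) =
      Gamma (N + k + 1) / Gamma (k + 2) := by
  obtain ⟨n, rfl⟩ := Nat.exists_eq_add_of_le' hN
  have hfact : ∏ i ∈ Finset.range (n + 1), ((i + 1).factorial : ℂ) ≠ 0 :=
    Finset.prod_ne_zero_iff.2 fun i _ => Nat.cast_ne_zero.2 (i + 1).factorial_ne_zero
  have hratio := prod_Gamma_div_Gamma (s := k + 2)
    (fun m h => hk m (by linear_combination h)) n
  rw [Finset.prod_div_distrib] at hratio
  have hnum (i : ℕ) : k + (n + 2 : ℕ) + (n + 2 : ℕ) - (n + 1 : ℕ) - i = k + 2 + (n + 1) - i := by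
    push_cast
    ring
  have hden (i : ℕ) : k + (n + 2 : ℕ) - i = k + 2 + n - i := by
    push_cast
    ring
  rw [show n + 2 - 1 = n + 1 from rfl]
  simp only [hnum, hden, Finset.prod_mul_distrib, Finset.prod_div_distrib, prod_Gamma_sub (n + 1)]
  rw [mul_comm, div_mul_eq_mul_div, mul_div_mul_right _ _ hfact, hratio]
  push_cast
  ring_nf

lemma cauchySelberg_const {N : ℕ} (hN : 2 ≤ N) {k : ℂ} (hk : -3 < k.re) :
    (2 * Real.pi) ^ (N - 1) * 2 ^ (((N - 1 : ℕ) : ℂ) * ((N - 1 : ℕ) - (k + N) - N)) *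
        ∏ i ∈ Finset.range (N - 1), ((i + 1).factorial : ℂ) *
          (Gamma (k + N + N - (N - 1 : ℕ) - i) / (Gamma (k + N - i) * Gamma (N - i))) =
      ((2 * Real.pi : ℝ) : ℂ) ^ (N - 1) * 2 ^ (-(((N : ℂ) - 1) * (k + N + 1))) *
        Gamma (N + k + 1) / Gamma (k + 2) := by
  have hpole : 0 < (k + 3).re := by
    rw [add_re, re_ofNat]
    linarith
  have hexp : ((N - 1 : ℕ) : ℂ) * ((N - 1 : ℕ) - (k + N) - N) = -((N - 1) * (k + N + 1)) := by
    rw [Nat.cast_pred (by lia)]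
    ring
  rw [prod_factorial_mul_Gamma_div hN (ne_neg_natCast_of_re_pos hpole), hexp, ofReal_mul,
    ofReal_ofNat, mul_div_assoc]

theorem stmt_2_general (n : ℕ) {a b : ℂ} (hab : 2 * (n : ℝ) - 1 < (a + b).re) :
    Integrable (fun x : Fin n → ℝ =>
      (∏ j : Fin n, ∏ l ∈ Finset.Ioi j, (((x l - x j) ^ 2 : ℝ) : ℂ)) *
        ∏ m : Fin n, ((1 + I * (x m : ℂ)) ^ (-a) * (1 - I * (x m : ℂ)) ^ (-b))) ∧
    ∫ x : Fin n → ℝ,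
      (∏ j : Fin n, ∏ l ∈ Finset.Ioi j, (((x l - x j) ^ 2 : ℝ) : ℂ)) *
        ∏ m : Fin n, ((1 + I * (x m : ℂ)) ^ (-a) * (1 - I * (x m : ℂ)) ^ (-b)) =
      (2 * Real.pi) ^ n * 2 ^ (n * (n - a - b)) * ∏ i ∈ Finset.range n,
        ((i + 1).factorial : ℂ) * (Gamma (a + b - n - i) / (Gamma (a - i) * Gamma (b - i))) := by
  have hre (i j : Fin n) : 1 < (a - (i : ℕ) + (b - (j : ℕ))).re := by
    have hi : ((i : ℕ) : ℝ) + 1 ≤ n := mod_cast i.isLt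
    have hj : ((j : ℕ) : ℝ) + 1 ≤ n := mod_cast j.isLt
    simp only [add_re, sub_re, natCast_re] at hab ⊢
    linarith
  have hint (i j : Fin n) : Integrable fun x : ℝ =>
      (1 + I * (x : ℂ)) ^ (-(a - (i : ℕ))) * (1 - I * (x : ℂ)) ^ (-(b - (j : ℕ))) :=
    integrable_cauchyWeight (hre i j)
  have hpole : 0 < (a + b - 1 - 2 * (n - 1)).re := by
    rw [sub_re, sub_re, one_re, show (2 * ((n : ℂ) - 1)).re = 2 * ((n : ℝ) - 1) by simp]
    linarith
  have hfactor (x : Fin n → ℝ) := prod_sq_sub_mul_prod_cauchyWeight a b x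
  refine ⟨(integrable_det_mul_det hint).congr (.of_forall fun x => (hfactor x).symm), ?_⟩
  calc _
    _ = ∫ x : Fin n → ℝ,
          (Matrix.of fun m i : Fin n => (1 + I * (x m : ℂ)) ^ (-(a - (i : ℕ)))).det *
            (Matrix.of fun m i : Fin n => (1 - I * (x m : ℂ)) ^ (-(b - (i : ℕ)))).det :=
      integral_congr_ae (.of_forall hfactor)
    _ = (Fintype.card (Fin n)).factorial * (Matrix.of fun i j : Fin n =>
          ∫ x, cauchyWeight (a - (i : ℕ)) (b - (j : ℕ)) x).det := integral_det_mul_det hint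
    _ = n.factorial * (Matrix.of fun i j : Fin n =>
          cauchyBeta (a - (i : ℕ)) (b - (j : ℕ))).det := by
      simp only [Fintype.card_fin, integral_cauchyWeight (hre _ _)]
    _ = _ := by
      rw [det_cauchyBeta (ne_neg_natCast_of_re_pos hpole)]
      simp only [Finset.prod_mul_distrib, ← Nat.cast_prod, ← factorial_mul_prod_factorial]
      push_cast
      ring

/-- The specialization J(1,1,k+N,N,1,N−1) of Selberg's integral
used in the proof of Theorem 3.1. -/
theorem stmt_2 (N : ℕ) (hN : 2 ≤ N) (k : ℂ) (hk : -3 < k.re) :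
    MeasureTheory.Integrable
      (fun x : Fin (N - 1) → ℝ =>
        (∏ j : Fin (N - 1), ∏ l ∈ Finset.Ioi j, (((x l - x j) ^ 2 : ℝ) : ℂ)) *
          ∏ n : Fin (N - 1),
            (1 + Complex.I * x n) ^ (-k - (N : ℂ)) * (1 - Complex.I * x n) ^ (-(N : ℂ)))
      ∧
    (∫ x : Fin (N - 1) → ℝ,
        (∏ j : Fin (N - 1), ∏ l ∈ Finset.Ioi j, (((x l - x j) ^ 2 : ℝ) : ℂ)) *
          ∏ n : Fin (N - 1),
            (1 + Complex.I * x n) ^ (-k - (N : ℂ)) * (1 - Complex.I * x n) ^ (-(N : ℂ)))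
      = ((2 * Real.pi : ℝ) : ℂ) ^ (N - 1) *
          (2 : ℂ) ^ (-(((N : ℂ) - 1) * (k + (N : ℂ) + 1))) *
          Complex.Gamma ((N : ℂ) + k + 1) / Complex.Gamma (k + 2) := by
  have hconv : 2 * ((N - 1 : ℕ) : ℝ) - 1 < (k + N + N).re := by
    rw [Nat.cast_pred (by lia), add_re, add_re, natCast_re]
    linarith
  rw [← cauchySelberg_const hN hk]
  simp only [← neg_add' k]
  exact stmt_2_general (N - 1) hconv
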